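/- For every integer n > 1, the group J_n^+ has exactly 2^{φ(n)} elements, where φ is Euler's totient function. -/

import Mathlib

open Matrix BigOperators
open scoped Classical

noncomputable section

abbrev Mat (n : ℕ) := Matrix (Fin n) (Fin n) ℂ

/-- A set of matrices is irreducible if the only invariant subspaces are `⊥` and `⊤`. -/
def IrreducibleSet {n : ℕ} (S : Set (Mat n)) : Prop :=
  ∀ W : Submodule ℂ (Fin n → ℂ),
    (∀ A ∈ S, ∀ v ∈ W, A.mulVec v ∈ W) → W = ⊥ ∨ W = ⊤

/-- All complex eigenvalues are real. -/
def RealSpectrum {n : ℕ} (M : Mat n) : Prop :=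
  ∀ z ∈ spectrum ℂ M, z.im = 0

/-- A set of matrices forming a group of invertible matrices under multiplication. -/
def IsMatGroup {n : ℕ} (G : Set (Mat n)) : Prop :=
  (1 : Mat n) ∈ G ∧ (∀ A ∈ G, ∀ B ∈ G, A * B ∈ G) ∧
    ∀ A ∈ G, IsUnit A ∧ A⁻¹ ∈ G

/-- Monomial matrix: exactly one nonzero entry in each row and each column. -/
def IsMonomialMat {n : ℕ} (M : Mat n) : Prop :=
  (∀ i, ∃! j, M i j ≠ 0) ∧ ∀ j, ∃! i, M i j ≠ 0

/-- Pattern of a matrix: nonzero entries replaced by 1. -/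
def patMat {n : ℕ} (M : Mat n) : Mat n :=
  Matrix.of fun i j => if M i j = 0 then 0 else 1

/-- Signed permutation matrix. -/
def IsSignedPermMat {n : ℕ} (M : Mat n) : Prop :=
  IsMonomialMat M ∧ ∀ i j, M i j = 0 ∨ M i j = 1 ∨ M i j = -1

/-- Permutation matrix associated to `σ` (sending `e j` to `e (σ j)`). -/
def permMat {n : ℕ} (σ : Equiv.Perm (Fin n)) : Mat n :=
  Matrix.of fun i j => if i = σ j then 1 else 0

def IsPermMat {n : ℕ} (M : Mat n) : Prop := ∃ σ : Equiv.Perm (Fin n), M = permMat σ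

/-- The cyclic permutation matrix `C_n`, sending `e i` to `e (i+1 mod n)`. -/
def cycMat (n : ℕ) : Mat n :=
  Matrix.of fun i j => if (i : ℕ) = ((j : ℕ) + 1) % n then 1 else 0

/-- The cyclic group `𝒞_n` generated by `C_n`. -/
def cycSet (n : ℕ) : Set (Mat n) := {M | ∃ k : ℕ, M = cycMat n ^ k}

/-- Signed diagonal matrix: member of `D_n(±1)`. -/
def IsSignedDiag {n : ℕ} (M : Mat n) : Prop :=
  ∃ d : Fin n → ℂ, (∀ i, d i = 1 ∨ d i = -1) ∧ M = Matrix.diagonal d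

/-- `avg_G(D) = D · D^G · … · D^(G^(m-1))` where `m = orderOf G` and `D^G = G⁻¹ D G`. -/
def avgMat {n : ℕ} (G D : Mat n) : Mat n :=
  ((List.range (orderOf G)).map fun k => (G ^ k)⁻¹ * D * G ^ k).prod

/-- `J_K = {J ∈ D_n(±1) : avg_G(J) = det(J)·I for all G ∈ K \ {I}}`. -/
def Jset {n : ℕ} (K : Set (Mat n)) : Set (Mat n) :=
  {J | IsSignedDiag J ∧ ∀ G ∈ K, G ≠ 1 → avgMat G J = J.det • (1 : Mat n)}

/-- `J_K^+ = {J ∈ J_K : det J = 1}`. -/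
def JsetPlus {n : ℕ} (K : Set (Mat n)) : Set (Mat n) :=
  {J | J ∈ Jset K ∧ J.det = 1}

/-- Realizable: simultaneously similar to a set of real-entried matrices. -/
def Realizable {n : ℕ} (S : Set (Mat n)) : Prop :=
  ∃ T : Mat n, IsUnit T ∧ ∀ A ∈ S, ∀ i j, ((T⁻¹ * A * T) i j).im = 0

/-- Indecomposable: no common invariant standard subspace except `0` and `ℂ^n`. -/
def IndecomposableSet {n : ℕ} (S : Set (Mat n)) : Prop :=
  ∀ I : Set (Fin n),
    (∀ A ∈ S, ∀ j ∈ I, ∀ i, A i j ≠ 0 → i ∈ I) → I = ∅ ∨ I = Set.univ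

/-- Kronecker product, identified with a matrix over `Fin (m*n)` canonically
(first factor's index is the block index). -/
def kron {m n : ℕ} (A : Mat m) (B : Mat n) : Mat (m * n) :=
  Matrix.reindex finProdFinEquiv finProdFinEquiv (Matrix.kroneckerMap (· * ·) A B)

end

/-! Conjugating a diagonal matrix by a power of `C_n` shifts its diagonal, so the average of
`diag(ε)` along a power of `C_n` has as entries the products of `ε` over the cosets of a cyclic
subgroup of `ℤ/n`, and we must count the sign functions on `ℤ/n` whose products over the cosets of
every nonzero cyclic subgroup are `1`. Products over the cosets of a subgroup determine those over
the cosets of any larger one. Hence, for `n = p ^ k`, only the subgroup of order `p` matters: its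
`p ^ (k - 1)` cosets impose independent conditions, leaving `p ^ k - p ^ (k - 1) = φ(p ^ k)` free
signs. For coprime `m` and `n`, every nonzero cyclic subgroup of `ℤ/m × ℤ/n` contains a nonzero
cyclic subgroup of one factor, so an admissible function on the product is an admissible function
on `ℤ/m` with values in the group of admissible functions on `ℤ/n`. Allowing any finite abelian
group `A` of values in place of the signs, this makes the count `|A| ^ φ(n)` multiplicative. -/

section FiberProd

variable {X Y Z A : Type*} [Fintype X] [DecidableEq Y]

/-- The pushforward of `a : X → A` along `π : X → Y`: its value at `y` is the product of `a`
over the fibre of `π` above `y`. -/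
def fiberProd [CommMonoid A] (π : X → Y) : (X → A) →* (Y → A) where
  toFun a y := ∏ x with π x = y, a x
  map_one' := by ext; simp
  map_mul' a b := by ext; simp [Finset.prod_mul_distrib]

lemma fiberProd_apply [CommMonoid A] (π : X → Y) (a : X → A) (y : Y) :
    fiberProd π a y = ∏ x with π x = y, a x := rfl

lemma prod_fiberProd [CommMonoid A] [Fintype Y] (π : X → Y) (a : X → A) :
    ∏ y, fiberProd π a y = ∏ x, a x :=
  Finset.prod_fiberwise _ _ _

lemma fiberProd_fiberProd [CommMonoid A] [Fintype Y] [DecidableEq Z] (ρ : Y → Z) (π : X → Y)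
    (a : X → A) : fiberProd ρ (fiberProd π a) = fiberProd (ρ ∘ π) a := by
  ext z
  simp only [fiberProd_apply, Function.comp_apply]
  rw [Finset.prod_fiberwise_eq_prod_filter]
  simp only [Finset.mem_filter_univ]

lemma fiberProd_surjective [CommMonoid A] {π : X → Y} (hπ : Function.Surjective π) :
    Function.Surjective (fiberProd π : (X → A) →* (Y → A)) := by
  intro b
  obtain ⟨s, hs⟩ := hπ.hasRightInverse
  refine ⟨fun x => if s (π x) = x then b (π x) else 1, ?_⟩
  ext y
  rw [fiberProd_apply, Finset.prod_eq_single (s y)]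
  · simp [hs y]
  · intro x hx hne
    rw [Finset.mem_filter_univ] at hx
    rw [hx, if_neg hne.symm]
  · simp [hs y]

lemma card_ker_fiberProd [CommGroup A] [Finite A] [Fintype Y] {π : X → Y}
    (hπ : Function.Surjective π) :
    Nat.card (fiberProd π : (X → A) →* (Y → A)).ker =
      Nat.card A ^ (Fintype.card X - Fintype.card Y) := by
  set f : (X → A) →* (Y → A) := fiberProd π
  have hindex : f.ker.index = Nat.card A ^ Fintype.card Y := by
    rw [Subgroup.index_ker, (MonoidHom.range_eq_top (f := f)).2 (fiberProd_surjective hπ),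
      Subgroup.card_top, Nat.card_fun, Nat.card_eq_fintype_card (α := Y)]
  have hmul : Nat.card f.ker * Nat.card A ^ Fintype.card Y = Nat.card A ^ Fintype.card X := by
    rw [← hindex, Subgroup.card_mul_index, Nat.card_fun, Nat.card_eq_fintype_card (α := X)]
  apply Nat.eq_of_mul_eq_mul_right (pow_pos (Nat.card_pos (α := A)) (Fintype.card Y))
  rw [hmul, ← pow_add, Nat.sub_add_cancel (Fintype.card_le_of_surjective π hπ)]

end FiberProd

section OrbitAvg

variable {G A : Type*}

/-- The translation analogue of `avgMat`: the value at `g` is the product of `a` over the orbit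
`g, g + h, …, g + (m - 1) • h`, where `m = addOrderOf h`. -/
noncomputable def orbitAvg [AddMonoid G] [CommMonoid A] (h : G) : (G → A) →* (G → A) where
  toFun a g := ∏ t ∈ Finset.range (addOrderOf h), a (g + t • h)
  map_one' := by ext; simp
  map_mul' a b := by ext; simp [Finset.prod_mul_distrib]

lemma orbitAvg_apply [AddMonoid G] [CommMonoid A] (h : G) (a : G → A) (g : G) :
    orbitAvg h a g = ∏ t ∈ Finset.range (addOrderOf h), a (g + t • h) := rfl

variable [AddGroup G]

lemma orbitAvg_eq_fiberProd_comp_mk [Fintype G] [CommMonoid A] (h : G) (a : G → A) :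
    orbitAvg h a =
      fiberProd (QuotientAddGroup.mk : G → G ⧸ AddSubgroup.zmultiples h) a ∘
        QuotientAddGroup.mk := by
  ext g
  rw [orbitAvg_apply, Function.comp_apply, fiberProd_apply]
  refine Finset.prod_nbij (fun t => g + t • h) ?_ ?_ ?_ fun _ _ => rfl
  · intro t _
    rw [Finset.mem_filter_univ, eq_comm, QuotientAddGroup.eq, neg_add_cancel_left]
    exact AddSubgroup.nsmul_mem_zmultiples h t
  · intro t ht u hu htu
    exact nsmul_injOn_Iio_addOrderOf (by simpa using ht) (by simpa using hu) (add_left_cancel htu)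
  · intro x hx
    rw [Finset.mem_coe, Finset.mem_filter_univ, eq_comm, QuotientAddGroup.eq,
      mem_zmultiples_iff_mem_range_addOrderOf, Finset.mem_image] at hx
    obtain ⟨t, ht, hth⟩ := hx
    exact ⟨t, ht, by simp [hth]⟩

lemma orbitAvg_eq_one_iff [Fintype G] [CommMonoid A] {h : G} {a : G → A} :
    orbitAvg h a = 1 ↔
      fiberProd (QuotientAddGroup.mk : G → G ⧸ AddSubgroup.zmultiples h) a = 1 := by
  rw [orbitAvg_eq_fiberProd_comp_mk]
  exact QuotientAddGroup.mk_surjective.injective_comp_right.eq_iff' rfl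

lemma orbitAvg_eq_one_of_mem_zmultiples [Finite G] [CommMonoid A] {h k : G} {a : G → A}
    (hk : k ∈ AddSubgroup.zmultiples h) (ha : orbitAvg k a = 1) : orbitAvg h a = 1 := by
  have := Fintype.ofFinite G
  rw [orbitAvg_eq_one_iff] at ha ⊢
  have hle : AddSubgroup.zmultiples k ≤ AddSubgroup.zmultiples h :=
    AddSubgroup.zmultiples_le_of_mem hk
  have hcomp : (QuotientAddGroup.mk : G → G ⧸ AddSubgroup.zmultiples h) =
      AddSubgroup.quotientMapOfLE hle ∘ QuotientAddGroup.mk := rfl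
  rw [hcomp, ← fiberProd_fiberProd, ha, map_one]

lemma prod_eq_one_of_orbitAvg_eq_one [Fintype G] [CommMonoid A] {h : G} {a : G → A}
    (ha : orbitAvg h a = 1) : ∏ g, a g = 1 := by
  rw [orbitAvg_eq_one_iff] at ha
  rw [← prod_fiberProd (QuotientAddGroup.mk : G → G ⧸ AddSubgroup.zmultiples h), ha]
  simp only [Pi.one_apply, Finset.prod_const_one]

lemma card_ker_orbitAvg [Finite G] [CommGroup A] [Finite A] (h : G) :
    Nat.card (orbitAvg h : (G → A) →* (G → A)).ker =
      Nat.card A ^ (Nat.card G - Nat.card G / addOrderOf h) := by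
  have := Fintype.ofFinite G
  have hker : (orbitAvg h : (G → A) →* (G → A)).ker =
      (fiberProd (QuotientAddGroup.mk : G → G ⧸ AddSubgroup.zmultiples h)).ker := by
    ext a
    exact orbitAvg_eq_one_iff
  have hquot : Nat.card G / addOrderOf h = Nat.card (G ⧸ AddSubgroup.zmultiples h) := by
    rw [AddSubgroup.card_eq_card_quotient_mul_card_addSubgroup (AddSubgroup.zmultiples h),
      Nat.card_zmultiples, Nat.mul_div_cancel _ (addOrderOf_pos h)]
  rw [hker, card_ker_fiberProd QuotientAddGroup.mk_surjective, hquot,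
    Nat.card_eq_fintype_card (α := G), Nat.card_eq_fintype_card (α := G ⧸ _)]

end OrbitAvg

section NullAverages

/-- The functions `a : G → A` all of whose orbit averages along nonzero elements of `G` are
trivial. For `G = ℤ/n` and `A = {±1}` this is the group `J_n^+` of the paper, a diagonal matrix
being identified with its diagonal. -/
noncomputable def nullAverages (G A : Type*) [AddMonoid G] [CommGroup A] : Subgroup (G → A) :=
  ⨅ h : {h : G // h ≠ 0}, (orbitAvg h.1).ker

variable {G H Y A : Type*} [CommGroup A]

lemma mem_nullAverages [AddMonoid G] {a : G → A} :
    a ∈ nullAverages G A ↔ ∀ h : G, h ≠ 0 → orbitAvg h a = 1 := by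
  simp [nullAverages, Subgroup.mem_iInf, MonoidHom.mem_ker]

lemma orbitAvg_comp_addEquiv [AddMonoid G] [AddMonoid H] (e : G ≃+ H) (h : G) (a : H → A) :
    orbitAvg h (a ∘ e) = orbitAvg (e h) a ∘ e := by
  ext g
  simp [orbitAvg_apply]

lemma comp_addEquiv_mem_nullAverages [AddMonoid G] [AddMonoid H] (e : G ≃+ H) {a : H → A} :
    a ∘ e ∈ nullAverages G A ↔ a ∈ nullAverages H A := by
  have hone (b : H → A) : b ∘ e = 1 ↔ b = 1 := e.surjective.injective_comp_right.eq_iff' rfl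
  simp_rw [mem_nullAverages, orbitAvg_comp_addEquiv, hone, e.surjective.forall, ne_eq,
    map_eq_zero_iff e e.injective]

lemma card_nullAverages_congr [AddMonoid G] [AddMonoid H] (e : G ≃+ H) :
    Nat.card (nullAverages G A) = Nat.card (nullAverages H A) :=
  Nat.card_congr <| ((e.toEquiv.arrowCongr (Equiv.refl A)).symm.subtypeEquiv fun _ =>
    (comp_addEquiv_mem_nullAverages e).symm).symm

lemma card_nullAverages_of_subsingleton [AddMonoid G] [Subsingleton G] :
    Nat.card (nullAverages G A) = Nat.card A := by
  have htop : nullAverages G A = ⊤ := by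
    ext a
    simp [mem_nullAverages, Subsingleton.elim _ (0 : G)]
  have : Unique G := ⟨⟨0⟩, fun _ => Subsingleton.elim _ _⟩
  rw [htop, Subgroup.card_top, Nat.card_fun, Nat.card_unique (α := G), pow_one]

lemma coe_orbitAvg_apply [AddMonoid G] (S : Subgroup (Y → A)) (g : G) (f : G → S)
    (x : G) (y : Y) :
    ((orbitAvg g f x : S) : Y → A) y = orbitAvg g (fun x' => (f x' : Y → A) y) x := by
  simp [orbitAvg_apply]

lemma mem_nullAverages_subgroup [AddMonoid G] (S : Subgroup (Y → A)) {f : G → S} :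
    f ∈ nullAverages G S ↔ ∀ y, (fun x => (f x : Y → A) y) ∈ nullAverages G A := by
  simp only [mem_nullAverages, funext_iff, Subtype.ext_iff, coe_orbitAvg_apply]
  exact ⟨fun hf y g hg x => hf g hg x y, fun hf g hg x y => hf y g hg x⟩

section Prod

lemma orbitAvg_mk_zero [AddMonoid G] [AddMonoid H] (g x : G) (y : H) (a : G × H → A) :
    orbitAvg (g, 0) a (x, y) = orbitAvg g (fun x' => a (x', y)) x := by
  simp [orbitAvg_apply, Prod.addOrderOf_mk]

lemma orbitAvg_zero_mk [AddMonoid G] [AddMonoid H] (h : H) (x : G) (y : H) (a : G × H → A) :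
    orbitAvg (0, h) a (x, y) = orbitAvg h (fun y' => a (x, y')) y := by
  simp [orbitAvg_apply, Prod.addOrderOf_mk]

lemma nsmul_ne_zero_of_coprime [AddMonoid G] {g : G} {m : ℕ} (hm : m.Coprime (addOrderOf g))
    (hg : g ≠ 0) : m • g ≠ 0 := fun h =>
  hg <| AddMonoid.addOrderOf_eq_one_iff.1 <|
    Nat.eq_one_of_dvd_coprimes hm (addOrderOf_dvd_of_nsmul_eq_zero h) dvd_rfl

variable [AddGroup G] [AddGroup H]

lemma mem_nullAverages_prod [Finite G] [Finite H] (hGH : (Nat.card G).Coprime (Nat.card H))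
    {a : G × H → A} :
    a ∈ nullAverages (G × H) A ↔
      (∀ y, (fun x => a (x, y)) ∈ nullAverages G A) ∧
        ∀ x, (fun y => a (x, y)) ∈ nullAverages H A := by
  simp only [mem_nullAverages]
  constructor
  · refine fun ha => ⟨fun y g hg => ?_, fun x h hh => ?_⟩
    · ext x
      rw [← orbitAvg_mk_zero, ha _ (by simpa using hg), Pi.one_apply, Pi.one_apply]
    · ext y
      rw [← orbitAvg_zero_mk, ha _ (by simpa using hh), Pi.one_apply, Pi.one_apply]
  · rintro ⟨haG, haH⟩ ⟨g, h⟩ hgh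
    have hcop : (addOrderOf g).Coprime (addOrderOf h) :=
      hGH.of_dvd (addOrderOf_dvd_natCard g) (addOrderOf_dvd_natCard h)
    by_cases hg : g = 0
    · have hh : h ≠ 0 := by simpa [hg] using hgh
      subst hg
      ext ⟨x, y⟩
      rw [orbitAvg_zero_mk, haH x h hh, Pi.one_apply, Pi.one_apply]
    · have hmem : (addOrderOf h • g, 0) ∈ AddSubgroup.zmultiples (g, h) :=
        ⟨addOrderOf h, by simp [addOrderOf_nsmul_eq_zero]⟩
      apply orbitAvg_eq_one_of_mem_zmultiples hmem
      ext ⟨x, y⟩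
      rw [orbitAvg_mk_zero, haG y _ (nsmul_ne_zero_of_coprime hcop.symm hg), Pi.one_apply,
        Pi.one_apply]

/-- Currying identifies the null averages on a product of groups of coprime orders with the
null averages on the first factor having values in those of the second. -/
def nullAveragesProdEquiv [Finite G] [Finite H] (hGH : (Nat.card G).Coprime (Nat.card H)) :
    nullAverages (G × H) A ≃ nullAverages G (nullAverages H A) where
  toFun a := ⟨fun x => ⟨fun y => a.1 (x, y), ((mem_nullAverages_prod hGH).1 a.2).2 x⟩,
    (mem_nullAverages_subgroup _).2 ((mem_nullAverages_prod hGH).1 a.2).1⟩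
  invFun f := ⟨fun z => (f.1 z.1 : H → A) z.2,
    (mem_nullAverages_prod hGH).2 ⟨(mem_nullAverages_subgroup _).1 f.2, fun x => (f.1 x).2⟩⟩

end Prod

section Cyclic

lemma mem_zmultiples_of_addOrderOf_dvd [AddGroup G] [IsAddCyclic G] [Finite G] {x h : G}
    (hx : addOrderOf x ∣ addOrderOf h) : x ∈ AddSubgroup.zmultiples h := by
  have := Fintype.ofFinite G
  have hsub : ({y | y ∈ AddSubgroup.zmultiples h} : Finset G) ⊆
      ({y | addOrderOf h • y = 0} : Finset G) := by
    intro y hy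
    rw [Finset.mem_filter_univ] at hy ⊢
    exact addOrderOf_dvd_iff_nsmul_eq_zero.1 (addOrderOf_dvd_of_mem_zmultiples hy)
  have hcard : Finset.card {y : G | addOrderOf h • y = 0} ≤
      Finset.card {y | y ∈ AddSubgroup.zmultiples h} := by
    rw [← Fintype.card_subtype (· ∈ AddSubgroup.zmultiples h), Fintype.card_zmultiples]
    exact IsAddCyclic.card_nsmul_eq_zero_le (addOrderOf_pos h)
  have hmem : x ∈ ({y | addOrderOf h • y = 0} : Finset G) := by
    rwa [Finset.mem_filter_univ, ← addOrderOf_dvd_iff_nsmul_eq_zero]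
  rwa [← Finset.eq_of_subset_of_card_le hsub hcard, Finset.mem_filter_univ] at hmem

lemma nullAverages_eq_ker_orbitAvg [AddGroup G] [IsAddCyclic G] [Finite G] {p k : ℕ}
    (hp : p.Prime) (hG : Nat.card G = p ^ k) {x : G} (hx : addOrderOf x = p) :
    nullAverages G A = (orbitAvg x).ker := by
  ext a
  rw [mem_nullAverages, MonoidHom.mem_ker]
  refine ⟨fun ha => ha x ?_, fun ha h hh => orbitAvg_eq_one_of_mem_zmultiples ?_ ha⟩
  · rintro rfl
    exact hp.one_lt.ne (addOrderOf_zero.symm.trans hx)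
  · apply mem_zmultiples_of_addOrderOf_dvd
    obtain ⟨j, -, hj⟩ := (Nat.dvd_prime_pow hp).1 (hG ▸ addOrderOf_dvd_natCard h)
    rw [hx, hj]
    refine dvd_pow_self p ?_
    rintro rfl
    exact hh (AddMonoid.addOrderOf_eq_one_iff.1 (by simpa using hj))

variable [Finite A]

lemma card_nullAverages_of_card_eq_prime_pow [AddGroup G] [IsAddCyclic G] [Finite G] {p k : ℕ}
    (hp : p.Prime) (hk : 0 < k) (hG : Nat.card G = p ^ k) :
    Nat.card (nullAverages G A) = Nat.card A ^ Nat.totient (p ^ k) := by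
  have := Fact.mk hp
  obtain ⟨x, hx⟩ := exists_prime_addOrderOf_dvd_card' (G := G) p (hG ▸ dvd_pow_self p hk.ne')
  have hexp : p ^ k - p ^ k / p = Nat.totient (p ^ k) := by
    obtain ⟨j, rfl⟩ := Nat.exists_eq_add_one.2 hk
    rw [Nat.totient_prime_pow_succ hp, pow_succ, Nat.mul_div_cancel _ hp.pos, Nat.mul_sub_one]
  rw [nullAverages_eq_ker_orbitAvg hp hG hx, card_ker_orbitAvg, hG, hx, hexp]

lemma card_nullAverages_zmod {n : ℕ} (hn : n ≠ 0) :
    Nat.card (nullAverages (ZMod n) A) = Nat.card A ^ Nat.totient n := by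
  induction n using Nat.recOnPosPrimePosCoprime generalizing A with
  | zero => exact (hn rfl).elim
  | one => simp [card_nullAverages_of_subsingleton]
  | prime_pow p k hp hk =>
    have : NeZero (p ^ k) := ⟨hn⟩
    exact card_nullAverages_of_card_eq_prime_pow hp hk (Nat.card_zmod _)
  | coprime m n hm hn' hmn ihm ihn =>
    have hm0 : NeZero m := ⟨by omega⟩
    have hn0 : NeZero n := ⟨by omega⟩
    have hcard : (Nat.card (ZMod m)).Coprime (Nat.card (ZMod n)) := by simpa using hmn
    rw [card_nullAverages_congr (ZMod.chineseRemainder hmn).toAddEquiv,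
      Nat.card_congr (nullAveragesProdEquiv hcard), ihm hm0.out, ihn hn0.out,
      ← pow_mul, Nat.totient_mul hmn, mul_comm]

theorem card_nullAverages [AddGroup G] [IsAddCyclic G] [Finite G] :
    Nat.card (nullAverages G A) = Nat.card A ^ Nat.totient (Nat.card G) := by
  rw [← card_nullAverages_congr (zmodAddCyclicAddEquiv ‹IsAddCyclic G›),
    card_nullAverages_zmod Nat.card_pos.ne']

end Cyclic

end NullAverages

section PermMat

variable {n : ℕ}

lemma permMat_eq_permMatrixHom (σ : Equiv.Perm (Fin n)) : permMat σ = permMatrixHom σ := by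
  ext i j
  simp [permMat, PEquiv.toMatrix_apply, Equiv.symm_apply_eq]

lemma permMat_pow (σ : Equiv.Perm (Fin n)) (k : ℕ) : permMat σ ^ k = permMat (σ ^ k) := by
  simp only [permMat_eq_permMatrixHom, map_pow]

lemma permMat_injective : Function.Injective (permMat : Equiv.Perm (Fin n) → Mat n) := by
  intro σ τ h
  ext j
  simpa [permMat, Fin.ext_iff] using congrFun₂ h (σ j) j

lemma permMat_eq_one_iff {σ : Equiv.Perm (Fin n)} : permMat σ = 1 ↔ σ = 1 :=
  permMat_injective.eq_iff' (by rw [permMat_eq_permMatrixHom, map_one])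

lemma orderOf_permMat (σ : Equiv.Perm (Fin n)) : orderOf (permMat σ) = orderOf σ :=
  orderOf_eq_orderOf_iff.2 fun k => by rw [permMat_pow, permMat_eq_one_iff]

lemma inv_permMat_mul_diagonal_mul_permMat (σ : Equiv.Perm (Fin n)) (d : Fin n → ℂ) :
    (permMat σ)⁻¹ * diagonal d * permMat σ = diagonal (d ∘ σ) := by
  have hinv : (permMat σ)⁻¹ * permMat σ = 1 := by
    apply nonsing_inv_mul
    simp [permMat_eq_permMatrixHom, isUnit_iff_ne_zero]
  have hcomm : diagonal d * permMat σ = permMat σ * diagonal (d ∘ σ) := by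
    ext i j
    by_cases hij : i = σ j <;> simp [permMat, hij]
  rw [mul_assoc, hcomm, ← mul_assoc, hinv, one_mul]

lemma avgMat_permMat_diagonal (σ : Equiv.Perm (Fin n)) (d : Fin n → ℂ) :
    avgMat (permMat σ) (diagonal d) =
      diagonal fun i => ∏ t ∈ Finset.range (orderOf σ), d ((σ ^ t) i) := by
  have hprod : (fun i => ∏ t ∈ Finset.range (orderOf σ), d ((σ ^ t) i)) =
      ((List.range (orderOf σ)).map fun t => d ∘ ⇑(σ ^ t)).prod :=
    (Finset.prod_fn _ _).symm
  simp_rw [avgMat, orderOf_permMat, permMat_pow, inv_permMat_mul_diagonal_mul_permMat, hprod]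
  rw [← diagonalRingHom_apply, map_list_prod, List.map_map]
  rfl

end PermMat

section CyclicMatrices

lemma addRight_eq_one_iff {G : Type*} [AddGroup G] {g : G} : Equiv.addRight g = 1 ↔ g = 0 := by
  simp [Equiv.ext_iff]

lemma orderOf_addRight {G : Type*} [AddGroup G] (g : G) :
    orderOf (Equiv.addRight g) = addOrderOf g := by
  refine Nat.dvd_antisymm (orderOf_dvd_iff_pow_eq_one.2 ?_) (addOrderOf_dvd_iff_nsmul_eq_zero.2 ?_)
  · rw [Equiv.nsmul_addRight, addRight_eq_one_iff, addOrderOf_nsmul_eq_zero]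
  · rw [← addRight_eq_one_iff, ← Equiv.nsmul_addRight, pow_orderOf_eq_one]

variable {n : ℕ} [NeZero n]

lemma val_nsmul_one (k : ℕ) : ((k • (1 : Fin n) : Fin n) : ℕ) = k % n := by
  induction k with
  | zero => simp
  | succ k ih => simp [succ_nsmul, Fin.val_add, ih]

lemma val_nsmul_one_self (g : Fin n) : (g : ℕ) • (1 : Fin n) = g := by
  rw [Fin.ext_iff, val_nsmul_one, Nat.mod_eq_of_lt g.isLt]

instance isAddCyclic_fin : IsAddCyclic (Fin n) :=
  ⟨1, fun g => ⟨(g : ℕ), by simpa using val_nsmul_one_self g⟩⟩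

lemma cycMat_pow (k : ℕ) : cycMat n ^ k = permMat (Equiv.addRight (k • (1 : Fin n))) := by
  have hcyc : cycMat n = permMat (Equiv.addRight 1) := by
    ext i j
    simp [cycMat, permMat, Fin.ext_iff, Fin.val_add]
  rw [hcyc, permMat_pow, Equiv.nsmul_addRight]

lemma mem_cycSet_iff {M : Mat n} :
    M ∈ cycSet n ↔ ∃ g : Fin n, M = permMat (Equiv.addRight g) := by
  constructor
  · rintro ⟨k, rfl⟩
    exact ⟨_, cycMat_pow k⟩
  · rintro ⟨g, rfl⟩
    exact ⟨g, by rw [cycMat_pow, val_nsmul_one_self]⟩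

end CyclicMatrices

section SignDiag

variable {n : ℕ}

/-- The diagonal matrix with diagonal `ε`; these are the elements of `D_n(±1)`. -/
def signDiag (ε : Fin n → ℤˣ) : Mat n := diagonal fun i => ((ε i : ℤ) : ℂ)

lemma signDiag_injective : Function.Injective (signDiag : (Fin n → ℤˣ) → Mat n) := by
  intro ε δ h
  ext i
  simpa using congrFun (diagonal_injective h) i

lemma isSignedDiag_iff {M : Mat n} : IsSignedDiag M ↔ ∃ ε, M = signDiag ε := by
  constructor
  · rintro ⟨d, hd, rfl⟩
    have hsign (i : Fin n) : ∃ u : ℤˣ, ((u : ℤ) : ℂ) = d i := by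
      rcases hd i with h | h
      · exact ⟨1, by simp [h]⟩
      · exact ⟨-1, by simp [h]⟩
    choose ε hε using hsign
    exact ⟨ε, by simp [signDiag, hε]⟩
  · rintro ⟨ε, rfl⟩
    refine ⟨_, fun i => ?_, rfl⟩
    rcases Int.units_eq_one_or (ε i) with h | h <;> simp [h]

lemma signDiag_one : signDiag (1 : Fin n → ℤˣ) = 1 := by
  simp [signDiag]

lemma det_signDiag (ε : Fin n → ℤˣ) : (signDiag ε).det = ((∏ i, ε i : ℤˣ) : ℤ) := by
  simp [signDiag]

lemma avgMat_addRight_signDiag [NeZero n] (g : Fin n) (ε : Fin n → ℤˣ) :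
    avgMat (permMat (Equiv.addRight g)) (signDiag ε) = signDiag (orbitAvg g ε) := by
  simp [signDiag, avgMat_permMat_diagonal, orderOf_addRight, orbitAvg_apply]

lemma signDiag_mem_JsetPlus_iff [n.AtLeastTwo] {ε : Fin n → ℤˣ} :
    signDiag ε ∈ JsetPlus (cycSet n) ↔ ε ∈ nullAverages (Fin n) ℤˣ := by
  have hne (g : Fin n) : permMat (Equiv.addRight g) ≠ 1 ↔ g ≠ 0 := by
    rw [ne_eq, permMat_eq_one_iff, addRight_eq_one_iff]
  have havg (g : Fin n) :
      avgMat (permMat (Equiv.addRight g)) (signDiag ε) = 1 ↔ orbitAvg g ε = 1 := by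
    rw [avgMat_addRight_signDiag, ← signDiag_one, signDiag_injective.eq_iff]
  rw [mem_nullAverages]
  constructor
  · rintro ⟨⟨-, hε⟩, hdet⟩ g hg
    simpa [hdet, havg] using hε _ (mem_cycSet_iff.2 ⟨g, rfl⟩) ((hne g).2 hg)
  · intro hε
    have : Nontrivial (Fin n) := Fin.nontrivial_iff_two_le.2 Nat.AtLeastTwo.prop
    obtain ⟨h, hh⟩ := exists_ne (0 : Fin n)
    have hdet : (signDiag ε).det = 1 := by
      rw [det_signDiag, prod_eq_one_of_orbitAvg_eq_one (hε h hh), Units.val_one, Int.cast_one]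
    refine ⟨⟨isSignedDiag_iff.2 ⟨ε, rfl⟩, fun G hG hG1 => ?_⟩, hdet⟩
    obtain ⟨g, rfl⟩ := mem_cycSet_iff.1 hG
    rw [hdet, one_smul, havg]
    exact hε g ((hne g).1 hG1)

lemma JsetPlus_cycSet_eq_image [n.AtLeastTwo] :
    JsetPlus (cycSet n) = signDiag '' nullAverages (Fin n) ℤˣ := by
  ext M
  constructor
  · intro hM
    obtain ⟨ε, rfl⟩ := isSignedDiag_iff.1 hM.1.1
    exact ⟨ε, signDiag_mem_JsetPlus_iff.1 hM, rfl⟩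
  · rintro ⟨ε, hε, rfl⟩
    exact signDiag_mem_JsetPlus_iff.2 hε

end SignDiag

/-- `|J_n^+| = 2^{φ(n)}` for every `n > 1`. -/
theorem stmt10 {n : ℕ} (hn : 1 < n) :
    (JsetPlus (cycSet n)).ncard = 2 ^ Nat.totient n := by
  have : n.AtLeastTwo := ⟨hn⟩
  calc (JsetPlus (cycSet n)).ncard
      = Nat.card (nullAverages (Fin n) ℤˣ) := by
        rw [JsetPlus_cycSet_eq_image, Set.ncard_image_of_injective _ signDiag_injective,
          ← Nat.card_coe_set_eq]
        rfl
    _ = Nat.card ℤˣ ^ Nat.totient (Nat.card (Fin n)) := card_nullAverages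
    _ = 2 ^ Nat.totient n := by
        rw [Nat.card_eq_fintype_card, Fintype.card_units_int, Nat.card_fin]
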